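/- arXiv:2109.13215 — 2 statements merged into one kernel-verified Lean document; each statement's English description precedes it below -/
import Mathlib

section
/- Let f̂(x) = a/√2 + b·∑_{j=1}^{N_A} cos(jnπx) with a, b > 0 and 2a > √2·b. Then the classification 0-1 risk of f̂ against the constant +1 ground truth satisfies C(f̂) ≤ √2·b·h(B,n) / (π·h(B,n)·(2a − √2·b)) + n/(2·h(B,n)). -/
open MeasureTheory

/-- `h(B,n) = (B - 1 + n) / 2`. -/
noncomputable def hBn (n B : ℕ) : ℝ := ((B : ℝ) - 1 + (n : ℝ)) / 2

/-- The learned function `f̂(x) = a/√2 + b ∑_{j=1}^{N_A} cos (j n π x)`,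
with `N_A = (B - 1)/(2n)`. -/
noncomputable def fhatS (n B : ℕ) (a b : ℝ) (x : ℝ) : ℝ :=
  a / Real.sqrt 2 +
    b * ∑ j ∈ Finset.Icc 1 ((B - 1) / (2 * n)),
      Real.cos ((j : ℝ) * (n : ℝ) * Real.pi * x)

/-- The classification 0-1 risk of `f` against the constant `+1` ground truth:
`C(f) = (1/2) · Leb {x ∈ [-1,1] : f(x) ≤ 0}` (test points uniform on `[-1,1]`). -/
noncomputable def classRisk (f : ℝ → ℝ) : ℝ :=
  (volume {x ∈ Set.Icc (-1 : ℝ) 1 | f x ≤ 0}).toReal / 2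

/-!
Every frequency of `f̂` is a multiple of `n`, so `f̂ x = g (n x)` for the cosine polynomial
`g x = a/√2 + b ∑_{j ≤ N} cos (j π x)` of period `2`, and this compression does not change the risk.
As `g` is even, its risk is the measure of `{g ≤ 0}` on `(0, 1]`. Summing the Dirichlet kernel and
using Jordan's inequality `x ≤ sin (π x / 2)`, one finds that this set lies in
`{β x ≤ -b sin (ω x)}` with `β = √2 a - b` and `ω = (2N + 1) π / 2`. The inequality can hold only on
the half-periods where the sine is negative, and the one starting at `(2k + 1) π / ω` contributes
at most the measure of the part of a single hump of `b sin (ω x)` above height `(2k + 1) β π / ω`.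
These heights form an arithmetic progression, so the sum of the contributions is controlled by the
area under the hump.
-/

open Set Function
open scoped ENNReal

section Sublevel

theorem sum_range_indicator_Ici_natCast_add_one_le (y : ℝ≥0∞) (K : ℕ) :
    ∑ k ∈ Finset.range K, (Ici (k + 1 : ℝ≥0∞)).indicator 1 y ≤ y := by
  induction K with
  | zero => simp
  | succ K ih =>
    by_cases hy : (K + 1 : ℝ≥0∞) ≤ y
    · calc ∑ k ∈ Finset.range (K + 1), (Ici (k + 1 : ℝ≥0∞)).indicator 1 y
          ≤ ∑ _k ∈ Finset.range (K + 1), (1 : ℝ≥0∞) :=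
            Finset.sum_le_sum fun _ _ => indicator_le_self _ _ _
        _ = K + 1 := by simp
        _ ≤ y := hy
    · rwa [Finset.sum_range_succ, indicator_of_notMem (by exact hy), add_zero]

theorem tsum_measure_natCast_add_one_le_le_lintegral {α : Type*} [MeasurableSpace α]
    {μ : Measure α} {f : α → ℝ≥0∞} (hf : AEMeasurable f μ) :
    ∑' k : ℕ, μ {x | (k + 1 : ℝ≥0∞) ≤ f x} ≤ ∫⁻ x, f x ∂μ := by
  have hmeas (k : ℕ) :
      AEMeasurable (fun x => (Ici (k + 1 : ℝ≥0∞)).indicator (1 : ℝ≥0∞ → ℝ≥0∞) (f x)) μ :=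
    (measurable_one.indicator measurableSet_Ici).comp_aemeasurable hf
  calc ∑' k : ℕ, μ {x | (k + 1 : ℝ≥0∞) ≤ f x}
      = ∑' k : ℕ, ∫⁻ x, (Ici (k + 1 : ℝ≥0∞)).indicator (1 : ℝ≥0∞ → ℝ≥0∞) (f x) ∂μ :=
        tsum_congr fun k => (lintegral_indicator_one₀
          (hf.nullMeasurableSet_preimage measurableSet_Ici)).symm
    _ = ∫⁻ x, ∑' k : ℕ, (Ici (k + 1 : ℝ≥0∞)).indicator (1 : ℝ≥0∞ → ℝ≥0∞) (f x) ∂μ :=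
        (lintegral_tsum hmeas).symm
    _ ≤ ∫⁻ x, f x ∂μ :=
        lintegral_mono fun x => ENNReal.tsum_le_of_sum_range_le
          (sum_range_indicator_Ici_natCast_add_one_le (f x))

variable {g : ℝ → ℝ} {T β : ℝ}

theorem tsum_volume_odd_mul_le_le {c : ℝ} (hT : 0 ≤ T) (hc : 0 < c)
    (hint : IntervalIntegrable g volume 0 T) (hg : ∀ x ∈ Icc 0 T, 0 ≤ g x) :
    ∑' k : ℕ, volume {t ∈ Icc 0 T | (2 * k + 1) * c ≤ g t} ≤
      ENNReal.ofReal ((∫ x in (0 : ℝ)..T, g x) / (2 * c) + T / 2) := by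
  set q : ℝ → ℝ := fun t => g t / (2 * c) + 1 / 2 with hq
  have hlevel (k : ℕ) (t : ℝ) :
      (2 * k + 1) * c ≤ g t ↔ (k + 1 : ℝ≥0∞) ≤ ENNReal.ofReal (q t) := by
    rw [← Nat.cast_add_one, ENNReal.natCast_le_ofReal k.succ_ne_zero, hq]
    push_cast
    rw [← sub_le_iff_le_add, le_div_iff₀ (by positivity)]
    ring_nf
  have hqint : IntervalIntegrable q volume 0 T := (hint.div_const _).add intervalIntegrable_const
  have hqint' : IntegrableOn q (Icc 0 T) :=
    (intervalIntegrable_iff_integrableOn_Icc_of_le hT).1 hqint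
  calc ∑' k : ℕ, volume {t ∈ Icc 0 T | (2 * k + 1) * c ≤ g t}
      = ∑' k : ℕ, volume.restrict (Icc 0 T) {t | (k + 1 : ℝ≥0∞) ≤ ENNReal.ofReal (q t)} := by
        simp only [Measure.restrict_apply' measurableSet_Icc, hlevel, ofPred_and, ofPred_mem_eq,
          inter_comm]
    _ ≤ ∫⁻ t in Icc 0 T, ENNReal.ofReal (q t) :=
        tsum_measure_natCast_add_one_le_le_lintegral hqint'.aemeasurable.ennreal_ofReal
    _ = ENNReal.ofReal (∫ t in (0 : ℝ)..T, q t) := by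
        rw [intervalIntegral.integral_of_le hT, ← integral_Icc_eq_integral_Ioc,
          ofReal_integral_eq_lintegral_ofReal hqint']
        filter_upwards [ae_restrict_mem measurableSet_Icc] with t ht
        have := hg t ht
        positivity
    _ = ENNReal.ofReal ((∫ x in (0 : ℝ)..T, g x) / (2 * c) + T / 2) := by
        rw [intervalIntegral.integral_add (hint.div_const _) intervalIntegrable_const,
          intervalIntegral.integral_div, intervalIntegral.integral_const]
        simp [div_eq_mul_inv]

theorem exists_mem_Icc_of_mul_le_neg (hT : 0 < T) (hβ : 0 < β) (hanti : Antiperiodic g T)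
    (hg : ∀ x ∈ Icc 0 T, 0 ≤ g x) {x : ℝ} (hx : 0 < x) (hle : β * x ≤ -g x) :
    ∃ k : ℕ, x - (2 * k + 1) * T ∈ Icc 0 T ∧
      (2 * k + 1) * (β * T) ≤ g (x - (2 * k + 1) * T) := by
  set k := ⌊x / (2 * T)⌋₊
  have hk : k * (2 * T) ≤ x :=
    (le_div_iff₀ (by positivity)).1 (Nat.floor_le (by positivity))
  have hk' : x < (k + 1) * (2 * T) := (div_lt_iff₀ (by positivity)).1 (Nat.lt_floor_add_one _)
  have hgx : g (x - k * (2 * T)) = g x := hanti.periodic_two_mul.sub_nat_mul_eq k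
  have hneg : g x < 0 := by linarith [mul_pos hβ hx]
  have hr : T < x - k * (2 * T) := by
    by_contra! h
    exact hneg.not_ge (hgx ▸ hg _ ⟨by linarith, h⟩)
  have hflip : g (x - (2 * k + 1) * T) = -g x := by
    rw [← hgx, ← hanti.sub_eq]
    ring_nf
  have ht : 0 ≤ x - (2 * k + 1) * T := by linarith
  refine ⟨k, ⟨ht, by linarith⟩, ?_⟩
  rw [hflip]
  linarith [mul_nonneg hβ.le ht]

theorem volume_setOf_mul_le_neg_le_of_antiperiodic (hT : 0 < T) (hβ : 0 < β)
    (hanti : Antiperiodic g T) (hint : IntervalIntegrable g volume 0 T)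
    (hg : ∀ x ∈ Icc 0 T, 0 ≤ g x) :
    volume {x | 0 < x ∧ β * x ≤ -g x} ≤
      ENNReal.ofReal ((∫ x in (0 : ℝ)..T, g x) / (2 * β * T) + T / 2) := by
  have hcover : {x | 0 < x ∧ β * x ≤ -g x} ⊆
      ⋃ k : ℕ, (· - (2 * k + 1) * T) ⁻¹' {t ∈ Icc 0 T | (2 * k + 1) * (β * T) ≤ g t} :=
    fun x ⟨hx, hle⟩ => mem_iUnion.2 (exists_mem_Icc_of_mul_le_neg hT hβ hanti hg hx hle)
  calc volume {x | 0 < x ∧ β * x ≤ -g x}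
      ≤ ∑' k : ℕ, volume
          ((· - (2 * k + 1) * T) ⁻¹' {t ∈ Icc 0 T | (2 * k + 1) * (β * T) ≤ g t}) :=
        (measure_mono hcover).trans (measure_iUnion_le _)
    _ = ∑' k : ℕ, volume {t ∈ Icc 0 T | (2 * k + 1) * (β * T) ≤ g t} := by
        simp only [sub_eq_add_neg, measure_preimage_add_right]
    _ ≤ ENNReal.ofReal ((∫ x in (0 : ℝ)..T, g x) / (2 * β * T) + T / 2) := by
        rw [mul_assoc 2 β T]
        exact tsum_volume_odd_mul_le_le hT.le (mul_pos hβ hT) hint hg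

theorem volume_setOf_mul_le_neg_mul_sin_le {b ω : ℝ} (hβ : 0 < β) (hb : 0 ≤ b) (hω : 0 < ω) :
    volume {x | 0 < x ∧ β * x ≤ -(b * Real.sin (ω * x))} ≤
      ENNReal.ofReal (b / (Real.pi * β) + Real.pi / (2 * ω)) := by
  have hanti : Antiperiodic (fun x => b * Real.sin (ω * x)) (Real.pi / ω) := fun x => by
    simp only [mul_add, mul_div_cancel₀ _ hω.ne', Real.sin_add_pi, mul_neg]
  have hnonneg : ∀ x ∈ Icc 0 (Real.pi / ω), 0 ≤ b * Real.sin (ω * x) := fun x hx =>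
    mul_nonneg hb <| Real.sin_nonneg_of_nonneg_of_le_pi (mul_nonneg hω.le hx.1)
      ((le_div_iff₀' hω).1 hx.2)
  have hintegral : ∫ x in (0 : ℝ)..Real.pi / ω, b * Real.sin (ω * x) = 2 * b / ω := by
    rw [intervalIntegral.integral_const_mul, intervalIntegral.integral_comp_mul_left _ hω.ne',
      mul_zero, mul_div_cancel₀ _ hω.ne', integral_sin, smul_eq_mul, Real.cos_zero, Real.cos_pi]
    ring
  refine (volume_setOf_mul_le_neg_le_of_antiperiodic (by positivity) hβ hanti
    (Continuous.intervalIntegrable (by fun_prop) _ _) hnonneg).trans_eq ?_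
  rw [hintegral]
  congr 1
  field_simp

end Sublevel

section ClassRisk

theorem intervalIntegral_comp_natCast_mul_of_periodic {E : Type*} [NormedAddCommGroup E]
    [NormedSpace ℝ E] {f : ℝ → E} {T : ℝ} (hf : Periodic f T)
    (hint : ∀ t₁ t₂, IntervalIntegrable f volume t₁ t₂) {n : ℕ} (hn : n ≠ 0) (t : ℝ) :
    ∫ x in t..t + T, f (n * x) = ∫ x in t..t + T, f x := by
  have hn' : (n : ℝ) ≠ 0 := Nat.cast_ne_zero.2 hn
  have hperiods : ∫ x in n * t..n * t + n * T, f x = (n : ℝ) • ∫ x in t..t + T, f x := by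
    have h := hf.intervalIntegral_add_zsmul_eq n (n * t) hint
    rw [hf.intervalIntegral_add_eq (n * t) t] at h
    simpa [Nat.cast_smul_eq_nsmul] using h
  rw [intervalIntegral.integral_comp_mul_left _ hn', mul_add, hperiods, inv_smul_smul₀ hn']

variable {f : ℝ → ℝ}

theorem classRisk_eq_integral (hf : Measurable f) :
    classRisk f = (∫ x in (-1 : ℝ)..1, {x | f x ≤ 0}.indicator 1 x) / 2 := by
  have hs : MeasurableSet {x | f x ≤ 0} := measurableSet_le hf measurable_const
  rw [classRisk, intervalIntegral.integral_of_le (by norm_num), ← integral_Icc_eq_integral_Ioc,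
    integral_indicator_one hs, measureReal_restrict_apply hs, inter_comm]
  rfl

theorem classRisk_comp_natCast_mul (hf : Measurable f) (hper : Periodic f 2) {n : ℕ} (hn : n ≠ 0) :
    classRisk (fun x => f (n * x)) = classRisk f := by
  set s := {x | f x ≤ 0}
  have hs : MeasurableSet s := measurableSet_le hf measurable_const
  have hsper : Periodic (s.indicator (1 : ℝ → ℝ)) 2 := fun x => by
    simp only [indicator, s, mem_ofPred_eq, hper x, Pi.one_apply]
  have hint (t₁ t₂ : ℝ) : IntervalIntegrable (s.indicator (1 : ℝ → ℝ)) volume t₁ t₂ :=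
    have h : IntervalIntegrable (1 : ℝ → ℝ) volume t₁ t₂ := intervalIntegrable_const
    ⟨h.1.indicator hs, h.2.indicator hs⟩
  have h := intervalIntegral_comp_natCast_mul_of_periodic hsper hint hn (-1)
  rw [show (-1 : ℝ) + 2 = 1 by norm_num] at h
  rw [classRisk_eq_integral (by fun_prop), classRisk_eq_integral hf, ← h]
  rfl

theorem classRisk_le_of_even (hf : Function.Even f) :
    classRisk f ≤ volume.real {x ∈ Ioc 0 1 | f x ≤ 0} := by
  set s := {x ∈ Ioc 0 1 | f x ≤ 0}
  have hs : volume s ≠ ∞ := measure_ne_top_of_subset (sep_subset _ _) (by simp)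
  have hcover : {x ∈ Icc (-1 : ℝ) 1 | f x ≤ 0} ⊆ {0} ∪ (s ∪ -s) := by
    rintro x ⟨⟨hx₁, hx₂⟩, hx⟩
    rcases lt_trichotomy x 0 with h | h | h
    · exact .inr <| .inr ⟨⟨by linarith, by linarith⟩, by rwa [hf x]⟩
    · exact .inl h
    · exact .inr <| .inl ⟨⟨h, hx₂⟩, hx⟩
  have hvol : volume {x ∈ Icc (-1 : ℝ) 1 | f x ≤ 0} ≤ 2 * volume s :=
    calc volume {x ∈ Icc (-1 : ℝ) 1 | f x ≤ 0}
        ≤ volume {(0 : ℝ)} + (volume s + volume (-s)) :=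
          (measure_mono hcover).trans <| (measure_union_le _ _).trans <| by
            gcongr; exact measure_union_le _ _
      _ = 2 * volume s := by simp [two_mul]
  have hreal := ENNReal.toReal_mono (ENNReal.mul_ne_top (by simp) hs) hvol
  rw [ENNReal.toReal_mul, ENNReal.toReal_ofNat] at hreal
  rw [classRisk, Measure.real]
  linarith

end ClassRisk

section CosinePolynomial

/-- The cosine polynomial `A + b ∑_{1 ≤ j ≤ N} cos (j π x)`, normalised to have period `2`, the
length of the domain `[-1, 1]` of test points. -/
noncomputable def cosPoly (N : ℕ) (A b x : ℝ) : ℝ :=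
  A + b * ∑ j ∈ Finset.Icc 1 N, Real.cos (j * Real.pi * x)

variable (N : ℕ) (A b : ℝ)

theorem continuous_cosPoly : Continuous (cosPoly N A b) := by
  unfold cosPoly
  fun_prop

theorem periodic_cosPoly : Periodic (cosPoly N A b) 2 := fun x => by
  have hcos (j : ℕ) : Real.cos (j * Real.pi * (x + 2)) = Real.cos (j * Real.pi * x) := by
    rw [← Real.cos_add_nat_mul_two_pi (j * Real.pi * x) j]
    ring_nf
  simp only [cosPoly, hcos]

theorem even_cosPoly : Function.Even (cosPoly N A b) := fun x => by
  simp only [cosPoly, mul_neg, Real.cos_neg]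

theorem fhatS_eq_cosPoly_comp {n : ℕ} (hn : 0 < n) (a : ℝ) :
    fhatS n (2 * n * N + 1) a b = fun x => cosPoly N (a / Real.sqrt 2) b (n * x) := by
  funext x
  have harg (j : ℕ) : (j : ℝ) * n * Real.pi * x = j * Real.pi * (n * x) := by ring
  simp only [fhatS, cosPoly, Nat.add_sub_cancel, Nat.mul_div_cancel_left N (by omega : 0 < 2 * n),
    harg]

theorem two_mul_sin_half_mul_sum_cos (θ : ℝ) :
    2 * Real.sin (θ / 2) * ∑ j ∈ Finset.Icc 1 N, Real.cos (j * θ) =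
      Real.sin ((2 * N + 1) * (θ / 2)) - Real.sin (θ / 2) := by
  induction N with
  | zero => simp
  | succ k ih =>
    have hstep : Real.sin ((2 * (k + 1 : ℕ) + 1) * (θ / 2)) - Real.sin ((2 * k + 1) * (θ / 2)) =
        2 * Real.sin (θ / 2) * Real.cos ((k + 1 : ℕ) * θ) := by
      rw [Real.sin_sub_sin]
      push_cast
      ring_nf
    rw [Finset.sum_Icc_succ_top (by omega), mul_add, ih, ← hstep]
    ring

variable {N A b}

theorem mul_le_neg_mul_sin_of_cosPoly_nonpos (hA : b ≤ 2 * A) {x : ℝ} (hx : x ∈ Icc 0 1)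
    (hle : cosPoly N A b x ≤ 0) :
    (2 * A - b) * x ≤ -(b * Real.sin ((2 * N + 1) * (Real.pi / 2) * x)) := by
  obtain ⟨hx₀, hx₁⟩ := hx
  have hjordan : x ≤ Real.sin (Real.pi * x / 2) := by
    have hle_half : Real.pi * x / 2 ≤ Real.pi / 2 := by
      have := mul_le_of_le_one_right Real.pi_pos.le hx₁
      linarith
    calc x = 2 / Real.pi * (Real.pi * x / 2) := by field_simp
      _ ≤ Real.sin (Real.pi * x / 2) := Real.mul_le_sin (by positivity) hle_half
  have hkernel : 2 * Real.sin (Real.pi * x / 2) * cosPoly N A b x =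
      (2 * A - b) * Real.sin (Real.pi * x / 2) +
        b * Real.sin ((2 * N + 1) * (Real.pi / 2) * x) := by
    have h := two_mul_sin_half_mul_sum_cos N (Real.pi * x)
    have harg : (2 * N + 1) * (Real.pi / 2) * x = (2 * N + 1) * (Real.pi * x / 2) := by ring
    rw [cosPoly, harg]
    simp only [← mul_assoc (Nat.cast _)] at h
    linear_combination b * h
  have hprod : 2 * Real.sin (Real.pi * x / 2) * cosPoly N A b x ≤ 0 :=
    mul_nonpos_of_nonneg_of_nonpos (by linarith) hle
  have hscaled := mul_le_mul_of_nonneg_left hjordan (sub_nonneg.2 hA)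
  linarith

theorem classRisk_cosPoly_le (hb : 0 ≤ b) (hA : b < 2 * A) :
    classRisk (cosPoly N A b) ≤ b / (Real.pi * (2 * A - b)) + 1 / (2 * N + 1) := by
  have hβ : 0 < 2 * A - b := sub_pos.2 hA
  have hsub : {x ∈ Ioc 0 1 | cosPoly N A b x ≤ 0} ⊆
      {x | 0 < x ∧ (2 * A - b) * x ≤ -(b * Real.sin ((2 * N + 1) * (Real.pi / 2) * x))} :=
    fun x ⟨hx, hle⟩ =>
      ⟨hx.1, mul_le_neg_mul_sin_of_cosPoly_nonpos hA.le (Ioc_subset_Icc_self hx) hle⟩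
  have hvol : volume {x ∈ Ioc 0 1 | cosPoly N A b x ≤ 0} ≤
      ENNReal.ofReal (b / (Real.pi * (2 * A - b)) + 1 / (2 * N + 1)) := by
    refine (measure_mono hsub).trans <|
      (volume_setOf_mul_le_neg_mul_sin_le hβ hb (by positivity)).trans_eq ?_
    congr 2
    field_simp
  exact (classRisk_le_of_even (even_cosPoly N A b)).trans
    (ENNReal.toReal_le_of_le_ofReal (by positivity) hvol)

end CosinePolynomial

theorem hBn_two_mul_mul_add_one (n N : ℕ) : hBn n (2 * n * N + 1) = n * (2 * N + 1) / 2 := by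
  rw [hBn]
  push_cast
  ring

/-- **Upper bound on the classification risk.**  For `f̂(x) = a/√2 + b ∑_{j=1}^{N_A} cos (j n π x)`
with `a, b > 0` and `2a > √2 b`, the classification risk against the constant `+1` ground
truth satisfies `C(f̂) ≤ √2 b h(B,n) / (π h(B,n) (2a - √2 b)) + n / (2 h(B,n))`. -/
theorem stmt_3 (n B : ℕ) (hn : 0 < n) (hB : 1 < B) (hdvd : 2 * n ∣ B - 1)
    (a b : ℝ) (ha : 0 < a) (hb : 0 < b) (hab : Real.sqrt 2 * b < 2 * a) :
    classRisk (fhatS n B a b) ≤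
      Real.sqrt 2 * b * hBn n B / (Real.pi * hBn n B * (2 * a - Real.sqrt 2 * b)) +
        (n : ℝ) / (2 * hBn n B) := by
  obtain ⟨N, hN⟩ := hdvd
  obtain rfl : B = 2 * n * N + 1 := by omega
  have hgap : 2 * a - Real.sqrt 2 * b = Real.sqrt 2 * (2 * (a / Real.sqrt 2) - b) := by
    field_simp
  have hgap_pos : 0 < 2 * (a / Real.sqrt 2) - b :=
    pos_of_mul_pos_right (hgap ▸ sub_pos.2 hab) (Real.sqrt_nonneg 2)
  calc classRisk (fhatS n (2 * n * N + 1) a b)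
      = classRisk (cosPoly N (a / Real.sqrt 2) b) := by
        rw [fhatS_eq_cosPoly_comp N b hn, classRisk_comp_natCast_mul
          (continuous_cosPoly _ _ _).measurable (periodic_cosPoly _ _ _) hn.ne']
    _ ≤ b / (Real.pi * (2 * (a / Real.sqrt 2) - b)) + 1 / (2 * N + 1) :=
        classRisk_cosPoly_le hb.le (sub_pos.1 hgap_pos)
    _ = _ := by
        rw [hgap, hBn_two_mul_mul_add_one]
        congr 1 <;> field_simp
end

section
/- Fix real exponents p > q > 1. Under the bilevel ensemble(n,p,q), let f̂ be the function learned by minimum-Σ-weighted-ℓ2-norm interpolation of constant labels 1 at the n regularly spaced points x_i = −1 + 2i/n. Then there is a constant C > 0 depending only on (p,q) such that for all n ≥ 2, the classification risk satisfies C(f̂) ≤ min{1/2, C·n^{q−p}}. In particular C(f̂) → 0 as n → ∞. -/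
open MeasureTheory Filter

/-- The lifted Fourier feature map `φ : ℝ → ℝ^B`,
`φ(x) = (1/√2, sin (π x), cos (π x), …, sin (((B-1)/2) π x), cos (((B-1)/2) π x))`. -/
noncomputable def phiF (B : ℕ) (x : ℝ) : Fin B → ℝ := fun j =>
  if j.val = 0 then 1 / Real.sqrt 2
  else if j.val % 2 = 1 then Real.sin ((((j.val + 1) / 2 : ℕ) : ℝ) * Real.pi * x)
  else Real.cos (((j.val / 2 : ℕ) : ℝ) * Real.pi * x)

/-- The `n` regularly spaced training points `x_i = -1 + 2 i / n`, `i = 1, …, n`. -/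
noncomputable def xtr (n : ℕ) (i : Fin n) : ℝ := -1 + 2 * ((i : ℕ) + 1 : ℝ) / (n : ℝ)

/-- `α` interpolates the constant labels `1` at the regular grid: `Φ α = (1, …, 1)`. -/
def Interpolates (n B : ℕ) (α : Fin B → ℝ) : Prop :=
  ∀ i : Fin n, ∑ j, α j * phiF B (xtr n i) j = 1

/-- The bilevel diagonal weights: `λ₁ = γ B` with `γ = n^{-q}` on the constant feature,
and `λ_L = (1 - γ) B / (B - 1)` on all other features. -/
noncomputable def bilevelLam (n B : ℕ) (q : ℝ) : Fin B → ℝ := fun j =>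
  if j.val = 0 then (n : ℝ) ^ (-q) * (B : ℝ)
  else (1 - (n : ℝ) ^ (-q)) * (B : ℝ) / ((B : ℝ) - 1)

/-- `α̂` is a minimum-`Σ`-weighted-`ℓ₂`-norm interpolator:
`α̂ = argmin {‖Σ^{-1/2} α‖₂ : Φ α = (1,…,1)}`, where `Σ = diag lam`. -/
def IsMinInterp (n B : ℕ) (lam : Fin B → ℝ) (α : Fin B → ℝ) : Prop :=
  Interpolates n B α ∧
    ∀ α' : Fin B → ℝ, Interpolates n B α' →
      ∑ j, (α j) ^ 2 / lam j ≤ ∑ j, (α' j) ^ 2 / lam j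

/-- `B` is (the odd integer closest to `n^p` with `2n ∣ B - 1`) -- captured by `Odd B`,
`2n ∣ B - 1`, and `|B - n^p| ≤ n` (half of the spacing `2n` between admissible values). -/
def BilevelB (n B : ℕ) (p : ℝ) : Prop :=
  Odd B ∧ 2 * n ∣ B - 1 ∧ |(B : ℝ) - (n : ℝ) ^ p| ≤ (n : ℝ)

/-! Averaging the kernel `∑ j, λ_j φ_j(x) φ_j(y)` over the grid kills every frequency that is not a
multiple of `n`, and the surviving ones equal `1` at all grid points. Hence the average is constant
on the grid, and normalising it gives the minimum-norm interpolant: with `B = 2nM + 1` and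
`u = nπ(x + 1)/2`, it is a positive multiple of `λ_1/2 + λ_L ∑_{k=1}^M cos (2ku)`.

By the closed form of the Dirichlet kernel, nonpositivity at `u ∈ [0, π]` means
`(λ_1 - λ_L) sin u + λ_L sin ((2M+1)u) ≤ 0`. This forces `sin u ≤ 2λ_L/λ_1`, which is of order
`n^(q-p)`; and since `λ_L/λ_1 ≤ (2M+1)/(2M)` it also forces `sin ((2M+1)u) ≤ 1/(2M+1)`, which
holds on at most half of `[0, π]`. -/

open Real

/-- `β` lies in the weighted row space of `A`, to which `α - β` is orthogonal, so Pythagoras applies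
in the inner product with weights `1 / w`. -/
theorem eq_of_sum_sq_div_le {ι κ : Type*} [Fintype ι] [Fintype κ] {w α β : ι → ℝ}
    {A : κ → ι → ℝ} {v : κ → ℝ} (hw : ∀ j, 0 < w j) (hβ : ∀ j, β j = w j * ∑ i, v i * A i j)
    (hA : ∀ i, ∑ j, α j * A i j = ∑ j, β j * A i j)
    (hle : ∑ j, α j ^ 2 / w j ≤ ∑ j, β j ^ 2 / w j) : α = β := by
  have orthogonal : ∑ j, (α j - β j) * (β j / w j) = 0 := by
    have hβw (j) : β j / w j = ∑ i, v i * A i j := by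
      rw [hβ, mul_div_cancel_left₀ _ (hw j).ne']
    calc ∑ j, (α j - β j) * (β j / w j)
        = ∑ i, v i * (∑ j, α j * A i j - ∑ j, β j * A i j) := by
          simp only [hβw, Finset.mul_sum, ← Finset.sum_sub_distrib]
          rw [Finset.sum_comm]
          exact Finset.sum_congr rfl fun i _ ↦ Finset.sum_congr rfl fun j _ ↦ by ring
      _ = 0 := by simp only [hA, sub_self, mul_zero, Finset.sum_const_zero]
  have pythagoras : ∑ j, α j ^ 2 / w j = ∑ j, β j ^ 2 / w j
      + 2 * ∑ j, (α j - β j) * (β j / w j) + ∑ j, (α j - β j) ^ 2 / w j := by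
    rw [Finset.mul_sum, ← Finset.sum_add_distrib, ← Finset.sum_add_distrib]
    exact Finset.sum_congr rfl fun j _ ↦ by ring
  have nonneg (j) (_ : j ∈ Finset.univ) : 0 ≤ (α j - β j) ^ 2 / w j :=
    div_nonneg (sq_nonneg _) (hw j).le
  have dist_eq_zero : ∑ j, (α j - β j) ^ 2 / w j = 0 :=
    le_antisymm (by linarith) (Finset.sum_nonneg nonneg)
  funext j
  have hj := (Finset.sum_eq_zero_iff_of_nonneg nonneg).mp dist_eq_zero j (Finset.mem_univ j)
  simpa [(hw j).ne', sub_eq_zero] using hj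

/-- The cosine sum `∑_{k=1}^M cos (k t)`, i.e. `(D_M(t) - 1) / 2` for the Dirichlet kernel `D_M`. -/
noncomputable def cosSum (M : ℕ) (t : ℝ) : ℝ := ∑ k ∈ Finset.range M, cos ((k + 1) * t)

theorem cosSum_succ (M : ℕ) (t : ℝ) : cosSum (M + 1) t = cosSum M t + cos ((M + 1) * t) :=
  Finset.sum_range_succ _ _

theorem cosSum_add_nat_mul_two_pi (M m : ℕ) (t : ℝ) :
    cosSum M (t + m * (2 * π)) = cosSum M t := by
  refine Finset.sum_congr rfl fun k _ ↦ ?_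
  rw [← cos_add_nat_mul_two_pi ((k + 1) * t) ((k + 1) * m)]
  push_cast
  ring_nf

theorem cosSum_nat_mul_two_pi (M m : ℕ) : cosSum M (m * (2 * π)) = M := by
  rw [← zero_add (m * (2 * π)), cosSum_add_nat_mul_two_pi]
  simp [cosSum]

theorem two_mul_sin_mul_cosSum (M : ℕ) (u : ℝ) :
    2 * sin u * cosSum M (2 * u) = sin ((2 * M + 1) * u) - sin u := by
  have closed_form : sin u * cosSum M (2 * u) = sin (M * u) * cos ((M + 1) * u) := by
    convert sin_mul_sum_cos M (2 * u) (2 * u) using 3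
    · ring
    · exact Finset.sum_congr rfl fun k _ ↦ by ring_nf
    · ring
    · ring
  rw [mul_assoc, closed_form, sin_sub_sin]
  ring_nf

theorem sum_range_mul_ite_dvd {R : Type*} [AddCommMonoid R] {n : ℕ} (hn : 0 < n) (M : ℕ)
    (g : ℕ → R) :
    ∑ k ∈ Finset.range (n * M), (if n ∣ k + 1 then g (k + 1) else 0)
      = ∑ l ∈ Finset.range M, g (n * (l + 1)) := by
  obtain ⟨m, rfl⟩ := Nat.exists_eq_succ_of_ne_zero hn.ne'
  induction M with
  | zero => simp
  | succ M ih =>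
    have not_dvd {r : ℕ} (hr : r ∈ Finset.range m) : ¬ (m + 1) ∣ (m + 1) * M + r + 1 := by
      rw [add_assoc, Nat.dvd_add_right (dvd_mul_right _ _)]
      exact Nat.not_dvd_of_pos_of_lt r.succ_pos (Nat.succ_lt_succ (Finset.mem_range.mp hr))
    have last : (m + 1) * M + m + 1 = (m + 1) * (M + 1) := by ring
    rw [Nat.mul_succ, Finset.sum_range_add, ih, Finset.sum_range_succ _ M,
      Finset.sum_range_succ _ m, Finset.sum_eq_zero fun r hr ↦ if_neg (not_dvd hr), zero_add,
      last, if_pos (dvd_mul_right _ _)]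

theorem sum_cos_sub_xtr {n : ℕ} (hn : 0 < n) (k : ℕ) (x : ℝ) :
    ∑ i, cos (k * (π * (x - xtr n i))) = if n ∣ k then n * cos (k * (π * (x + 1))) else 0 := by
  have hn' : (n : ℝ) ≠ 0 := by positivity
  split_ifs with h
  · obtain ⟨m, rfl⟩ := h
    have aliased (i : Fin n) :
        cos ((n * m : ℕ) * (π * (x - xtr n i))) = cos ((n * m : ℕ) * (π * (x + 1))) := by
      rw [← cos_sub_nat_mul_two_pi (_ * (π * (x + 1))) (m * (i + 1)), xtr]
      congr 1
      push_cast
      field_simp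
      ring
    simp only [aliased, Finset.sum_const, Finset.card_univ, Fintype.card_fin, nsmul_eq_mul]
  · have arithmetic_progression (i : Fin n) : k * (π * (x - xtr n i))
        = -(2 * π * k / n) * (i : ℕ) + (k * (π * (x + 1)) - 2 * π * k / n) := by
      rw [xtr]
      ring
    have step_ne (m : ℤ) : -(2 * π * k / n) ≠ m * (2 * π) := by
      intro hm
      field_simp at hm
      have hkm : (k : ℤ) = n * -m := by
        rify
        linarith
      exact h (Int.natCast_dvd_natCast.mp ⟨-m, hkm⟩)
    have half_turns : (n : ℝ) * -(2 * π * k / n) / 2 = (-k : ℤ) * π := by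
      push_cast
      field_simp
    simp only [arithmetic_progression]
    rw [Fin.sum_univ_eq_sum_range fun i ↦ cos (-(2 * π * k / n) * i + _), sum_cos n step_ne,
      half_turns, sin_int_mul_pi, zero_mul, zero_div]

theorem sum_cosSum_sub_xtr {n : ℕ} (hn : 0 < n) (M : ℕ) (x : ℝ) :
    ∑ i, cosSum (n * M) (π * (x - xtr n i)) = n * cosSum M (n * π * (x + 1)) := by
  simp only [cosSum, ← Nat.cast_add_one]
  rw [Finset.sum_comm, Finset.sum_congr rfl fun k _ ↦ sum_cos_sub_xtr hn (k + 1) x,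
    sum_range_mul_ite_dvd hn M fun k ↦ n * cos (k * (π * (x + 1))), Finset.mul_sum]
  refine Finset.sum_congr rfl fun l _ ↦ ?_
  push_cast
  ring_nf

/-- The weight `a` on the constant feature and `b` on all others; `bilevelLam` is of this form. -/
def spikedWeight (a b : ℝ) {B : ℕ} (j : Fin B) : ℝ := if j.val = 0 then a else b

theorem sum_spikedWeight_mul_phiF_mul_phiF (a b x y : ℝ) (K : ℕ) :
    ∑ j, spikedWeight a b j * phiF (2 * K + 1) x j * phiF (2 * K + 1) y j
      = a / 2 + b * cosSum K (π * (x - y)) := by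
  induction K with
  | zero =>
    simp [spikedWeight, phiF, cosSum, mul_assoc, ← mul_inv, div_eq_mul_inv]
  | succ K ih =>
    have index : (2 * K + 1 + 1) / 2 = K + 1 := by omega
    have addition_formula : cos ((K + 1) * (π * (x - y)))
        = sin ((K + 1) * π * x) * sin ((K + 1) * π * y)
          + cos ((K + 1) * π * x) * cos ((K + 1) * π * y) := by
      rw [add_comm (sin _ * _), ← cos_sub]
      ring_nf
    rw [cosSum_succ, addition_formula, mul_add b, ← add_assoc, ← ih,
      show 2 * (K + 1) + 1 = 2 * K + 1 + 1 + 1 by ring, Fin.sum_univ_castSucc,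
      Fin.sum_univ_castSucc, add_assoc]
    congr 1
    simp only [spikedWeight, Fin.val_castSucc, Fin.val_last, Nat.add_eq_zero_iff, mul_eq_zero,
      OfNat.ofNat_ne_zero, false_or, one_ne_zero, and_false, ↓reduceIte, phiF,
      Nat.mul_add_mod_self_left, Nat.mod_succ, index, Nat.cast_add, Nat.cast_one,
      Nat.add_mod_right, Nat.mul_mod_right, zero_ne_one]
    ring

theorem sum_grid_kernel {n : ℕ} (hn : 0 < n) (M : ℕ) (a b x : ℝ) :
    ∑ i, ∑ j, spikedWeight a b j * phiF (2 * (n * M) + 1) x j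
        * phiF (2 * (n * M) + 1) (xtr n i) j
      = n * (a / 2 + b * cosSum M (n * π * (x + 1))) := by
  simp only [sum_spikedWeight_mul_phiF_mul_phiF, Finset.sum_add_distrib, ← Finset.mul_sum,
    sum_cosSum_sub_xtr hn, Finset.sum_const, Finset.card_univ, Fintype.card_fin, nsmul_eq_mul]
  ring

theorem cosSum_xtr {n : ℕ} (hn : 0 < n) (M : ℕ) (i : Fin n) :
    cosSum M (n * π * (xtr n i + 1)) = M := by
  rw [← cosSum_nat_mul_two_pi M (i + 1), xtr]
  congr 1
  push_cast
  field_simp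
  ring

theorem IsMinInterp.sum_mul_phiF {n M : ℕ} {a b : ℝ} (hn : 0 < n) (ha : 0 < a) (hb : 0 < b)
    {α : Fin (2 * (n * M) + 1) → ℝ} (hα : IsMinInterp n _ (spikedWeight a b) α) (x : ℝ) :
    ∑ j, α j * phiF _ x j
      = (a / 2 + b * cosSum M (n * π * (x + 1))) / (a / 2 + b * M) := by
  have hn' : (n : ℝ) ≠ 0 := by positivity
  have hD : a / 2 + b * M ≠ 0 := by positivity
  set c : ℝ := (n * (a / 2 + b * M))⁻¹ with hc
  set β : Fin (2 * (n * M) + 1) → ℝ :=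
    fun j ↦ spikedWeight a b j * ∑ i, c * phiF _ (xtr n i) j with hβ
  have eval_β (x : ℝ) : ∑ j, β j * phiF _ x j
      = (a / 2 + b * cosSum M (n * π * (x + 1))) / (a / 2 + b * M) := by
    calc ∑ j, β j * phiF _ x j
        = c * ∑ i, ∑ j, spikedWeight a b j * phiF _ x j * phiF _ (xtr n i) j := by
          rw [Finset.sum_comm, Finset.mul_sum]
          refine Finset.sum_congr rfl fun j _ ↦ ?_
          simp only [hβ, ← Finset.mul_sum]
          ring
      _ = _ := by
          rw [sum_grid_kernel hn, hc]
          field_simp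
  have hβ_interp : Interpolates n _ β := fun i ↦ by
    rw [eval_β, cosSum_xtr hn, div_self hD]
  have weight_pos (j : Fin (2 * (n * M) + 1)) : 0 < spikedWeight a b j := by
    unfold spikedWeight
    split_ifs <;> assumption
  have hαβ : α = β := eq_of_sum_sq_div_le weight_pos (fun _ ↦ rfl)
    (fun i ↦ (hα.1 i).trans (hβ_interp i).symm) (hα.2 β hβ_interp)
  rw [hαβ, eval_β]

theorem volume_inter_Icc_le_of_periodic {S : Set ℝ} {T : ℝ}
    (hS : Function.Periodic (· ∈ S) T) (r : ℝ) (m : ℕ) :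
    volume (S ∩ Set.Icc 0 (m * T + r))
      ≤ m * volume (S ∩ Set.Icc 0 T) + volume (S ∩ Set.Icc 0 r) := by
  induction m with
  | zero => simp
  | succ m ih =>
    have split : S ∩ Set.Icc 0 ((m + 1 : ℕ) * T + r)
        ⊆ S ∩ Set.Icc 0 T ∪ (· + -T) ⁻¹' (S ∩ Set.Icc 0 (m * T + r)) := by
      rintro x ⟨hxS, hx0, hx⟩
      rcases le_total x T with hxT | hxT
      · exact .inl ⟨hxS, hx0, hxT⟩
      · refine .inr ⟨?_, by simpa using hxT, ?_⟩
        · have := hS (x + -T)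
          simp only [neg_add_cancel_right] at this
          exact this ▸ hxS
        · push_cast at hx
          linarith
    calc volume (S ∩ Set.Icc 0 ((m + 1 : ℕ) * T + r))
        ≤ volume (S ∩ Set.Icc 0 T) + volume (S ∩ Set.Icc 0 (m * T + r)) := by
          refine (measure_mono split).trans ((measure_union_le _ _).trans ?_)
          rw [measure_preimage_add_right]
      _ ≤ volume (S ∩ Set.Icc 0 T)
          + (m * volume (S ∩ Set.Icc 0 T) + volume (S ∩ Set.Icc 0 r)) := by gcongr
      _ = (m + 1 : ℕ) * volume (S ∩ Set.Icc 0 T) + volume (S ∩ Set.Icc 0 r) := by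
          push_cast
          ring

theorem classRisk_comp_affine_le {g : ℝ → ℝ} {T : ℝ} (hT : 0 < T) (hg : Function.Periodic g T)
    {n : ℕ} (hn : 0 < n) :
    classRisk (fun x ↦ g (n * T / 2 * (x + 1)))
      ≤ volume.real {u ∈ Set.Icc 0 T | g u ≤ 0} / T := by
  set S : Set ℝ := {u | g u ≤ 0} with hS
  have scale_pos : 0 < n * T / 2 := by positivity
  have nonpos_eq_preimage : {x ∈ Set.Icc (-1 : ℝ) 1 | g (n * T / 2 * (x + 1)) ≤ 0}
      = (· + 1) ⁻¹' ((n * T / 2 * ·) ⁻¹' (S ∩ Set.Icc 0 (n * T + 0))) := by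
    ext x
    have lower : 0 ≤ n * T / 2 * (x + 1) ↔ -1 ≤ x := by
      rw [mul_nonneg_iff_of_pos_left scale_pos, ← neg_le_iff_add_nonneg]
    have upper : n * T / 2 * (x + 1) ≤ n * T + 0 ↔ x ≤ 1 := by
      rw [show n * T + 0 = n * T / 2 * (1 + 1) by ring, mul_le_mul_iff_right₀ scale_pos,
        add_le_add_iff_right]
    simp only [hS, Set.mem_preimage, Set.mem_inter_iff, Set.mem_Icc, lower, upper]
    exact and_comm
  have volume_le : volume {x ∈ Set.Icc (-1 : ℝ) 1 | g (n * T / 2 * (x + 1)) ≤ 0}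
      ≤ ENNReal.ofReal (n * T / 2)⁻¹ * (n * volume (S ∩ Set.Icc 0 T)) := by
    rw [nonpos_eq_preimage, measure_preimage_add_right, volume_preimage_mul_left scale_pos.ne',
      abs_of_pos (inv_pos.mpr scale_pos)]
    gcongr
    simpa [measure_inter_null_of_null_right] using
      volume_inter_Icc_le_of_periodic (S := S) (hg.comp (· ≤ 0)) 0 n
  have volume_period : volume (S ∩ Set.Icc 0 T) = volume {u ∈ Set.Icc 0 T | g u ≤ 0} := by
    rw [Set.inter_comm]
    rfl
  have volume_ne_top : volume {u ∈ Set.Icc 0 T | g u ≤ 0} ≠ ⊤ :=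
    measure_ne_top_of_subset (Set.sep_subset _ _) measure_Icc_lt_top.ne
  rw [volume_period] at volume_le
  have toReal_le := ENNReal.toReal_mono (by finiteness) volume_le
  simp only [ENNReal.toReal_mul, ENNReal.toReal_natCast,
    ENNReal.toReal_ofReal (inv_pos.mpr scale_pos).le] at toReal_le
  calc classRisk (fun x ↦ g (n * T / 2 * (x + 1)))
      ≤ (n * T / 2)⁻¹ * (n * volume.real {u ∈ Set.Icc 0 T | g u ≤ 0}) / 2 := by
        unfold classRisk
        gcongr
        exact toReal_le
    _ = volume.real {u ∈ Set.Icc 0 T | g u ≤ 0} / T := by field_simp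

theorem volume_sin_le (s : ℝ) :
    volume {u ∈ Set.Icc 0 π | sin u ≤ s} ≤ ENNReal.ofReal (2 * arcsin s) := by
  have near_endpoint : {u ∈ Set.Icc 0 π | sin u ≤ s}
      ⊆ Set.Icc 0 (arcsin s) ∪ Set.Icc (π - arcsin s) π := by
    rintro u ⟨⟨hu0, huπ⟩, hu⟩
    rcases le_total u (π / 2) with h | h
    · refine .inl ⟨hu0, ?_⟩
      rw [← arcsin_sin (by linarith) h]
      exact monotone_arcsin hu
    · refine .inr ⟨?_, huπ⟩
      rw [sub_le_comm, ← arcsin_sin (x := π - u) (by linarith) (by linarith), sin_pi_sub]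
      exact monotone_arcsin hu
  calc volume {u ∈ Set.Icc 0 π | sin u ≤ s}
      ≤ volume (Set.Icc 0 (arcsin s)) + volume (Set.Icc (π - arcsin s) π) :=
        (measure_mono near_endpoint).trans (measure_union_le _ _)
    _ = ENNReal.ofReal (2 * arcsin s) := by
        rw [volume_Icc, volume_Icc, sub_zero, sub_sub_cancel, ← two_mul,
          ENNReal.ofReal_mul two_pos.le, ENNReal.ofReal_ofNat]

theorem volume_sin_le_two_pi {s : ℝ} (hs : 0 ≤ s) :
    volume {u ∈ Set.Icc 0 (2 * π) | sin u ≤ s} ≤ ENNReal.ofReal (2 * arcsin s + π) := by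
  have split : {u ∈ Set.Icc 0 (2 * π) | sin u ≤ s}
      ⊆ {u ∈ Set.Icc 0 π | sin u ≤ s} ∪ Set.Icc π (2 * π) := by
    rintro u ⟨⟨hu0, hu⟩, hus⟩
    exact (le_total u π).imp (fun h ↦ ⟨⟨hu0, h⟩, hus⟩) (fun h ↦ ⟨h, hu⟩)
  calc volume {u ∈ Set.Icc 0 (2 * π) | sin u ≤ s}
      ≤ volume {u ∈ Set.Icc 0 π | sin u ≤ s} + volume (Set.Icc π (2 * π)) :=
        (measure_mono split).trans (measure_union_le _ _)
    _ ≤ ENNReal.ofReal (2 * arcsin s) + ENNReal.ofReal π := by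
        gcongr
        · exact volume_sin_le s
        · rw [volume_Icc, two_mul, add_sub_cancel_right]
    _ = ENNReal.ofReal (2 * arcsin s + π) :=
        (ENNReal.ofReal_add (mul_nonneg two_pos.le (arcsin_nonneg.mpr hs)) pi_pos.le).symm

theorem volume_sin_odd_mul_le (M : ℕ) {s : ℝ} (hs : 0 ≤ s) :
    volume {u ∈ Set.Icc 0 π | sin ((2 * M + 1) * u) ≤ s}
      ≤ ENNReal.ofReal ((M * π + 2 * (M + 1) * arcsin s) / (2 * M + 1)) := by
  set S : Set ℝ := {v | sin v ≤ s} with hS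
  have hN : (0 : ℝ) < 2 * M + 1 := by positivity
  have arcsin_nonneg : 0 ≤ arcsin s := arcsin_nonneg.mpr hs
  have half_period : volume (S ∩ Set.Icc 0 π) ≤ ENNReal.ofReal (2 * arcsin s) := by
    rw [Set.inter_comm]
    exact volume_sin_le s
  have full_period : volume (S ∩ Set.Icc 0 (2 * π)) ≤ ENNReal.ofReal (2 * arcsin s + π) := by
    rw [Set.inter_comm]
    exact volume_sin_le_two_pi hs
  have eq_preimage : {u ∈ Set.Icc 0 π | sin ((2 * M + 1) * u) ≤ s}
      = ((2 * M + 1 : ℝ) * ·) ⁻¹' (S ∩ Set.Icc 0 (M * (2 * π) + π)) := by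
    ext u
    have upper : (2 * M + 1) * u ≤ M * (2 * π) + π ↔ u ≤ π := by
      rw [show M * (2 * π) + π = (2 * M + 1) * π by ring, mul_le_mul_iff_right₀ hN]
    simp only [hS, Set.mem_preimage, Set.mem_inter_iff, Set.mem_Icc, upper,
      mul_nonneg_iff_of_pos_left hN]
    exact and_comm
  rw [eq_preimage, volume_preimage_mul_left hN.ne', abs_of_pos (inv_pos.mpr hN)]
  calc ENNReal.ofReal (2 * M + 1)⁻¹ * volume (S ∩ Set.Icc 0 (M * (2 * π) + π))
      ≤ ENNReal.ofReal (2 * M + 1)⁻¹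
          * (M * ENNReal.ofReal (2 * arcsin s + π) + ENNReal.ofReal (2 * arcsin s)) := by
        gcongr
        refine (volume_inter_Icc_le_of_periodic (sin_periodic.comp (· ≤ s)) π M).trans ?_
        gcongr
        · exact full_period
        · exact half_period
    _ = ENNReal.ofReal ((M * π + 2 * (M + 1) * arcsin s) / (2 * M + 1)) := by
        rw [← ENNReal.ofReal_natCast M, ← ENNReal.ofReal_mul (by positivity),
          ← ENNReal.ofReal_add (by positivity) (by positivity),
          ← ENNReal.ofReal_mul (by positivity)]
        congr 1
        field_simp
        ring

theorem arcsin_mul_le_mul_arcsin {s t : ℝ} (hs : 0 ≤ s) (hst : s ≤ t) (ht : t ≤ 1) :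
    arcsin s * t ≤ s * arcsin t := by
  rcases hs.eq_or_lt with rfl | hs'
  · simp
  have hy : 0 < arcsin t := arcsin_pos.mpr (hs'.trans_le hst)
  have hyπ : arcsin t ≤ π := by linarith [arcsin_le_pi_div_two t, pi_pos]
  have hxy : arcsin s / arcsin t ≤ 1 := (div_le_one hy).mpr (monotone_arcsin hst)
  have chord := strictConcaveOn_sin_Icc.concaveOn.2 (Set.left_mem_Icc.mpr pi_pos.le)
    ⟨hy.le, hyπ⟩ (sub_nonneg.mpr hxy) (div_nonneg (arcsin_nonneg.mpr hs) hy.le)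
    (sub_add_cancel _ _)
  simp only [smul_eq_mul, mul_zero, sin_zero, zero_add, div_mul_cancel₀ _ hy.ne',
    sin_arcsin (by linarith : -1 ≤ s) (hst.trans ht),
    sin_arcsin (by linarith : -1 ≤ t) ht] at chord
  rwa [div_mul_eq_mul_div, div_le_iff₀ hy] at chord

theorem arcsin_le_pi_div_two_mul {s : ℝ} (hs : 0 ≤ s) : arcsin s ≤ π / 2 * s := by
  rcases le_total s 1 with h | h
  · simpa [mul_comm] using arcsin_mul_le_mul_arcsin hs h le_rfl
  · exact (arcsin_le_pi_div_two s).trans (le_mul_of_one_le_right (by positivity) h)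

theorem arcsin_le_pi_div_three_mul {s : ℝ} (hs : 0 ≤ s) (hs' : s ≤ 1 / 2) :
    arcsin s ≤ π / 3 * s := by
  have arcsin_half : arcsin (1 / 2) = π / 6 := by
    rw [← sin_pi_div_six, arcsin_sin] <;> linarith [pi_pos]
  have := arcsin_mul_le_mul_arcsin hs hs' (by norm_num)
  rw [arcsin_half] at this
  linarith

theorem volume_sin_odd_mul_le_half {M : ℕ} (hM : 0 < M) :
    volume {u ∈ Set.Icc 0 π | sin ((2 * M + 1) * u) ≤ 1 / (2 * M + 1)}
      ≤ ENNReal.ofReal (π / 2) := by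
  have hM' : (1 : ℝ) ≤ M := by exact_mod_cast hM
  have hN : (0 : ℝ) < 2 * M + 1 := by positivity
  have threshold_le : 1 / (2 * M + 1 : ℝ) ≤ 1 / 2 := by gcongr; linarith
  have arcsin_le := arcsin_le_pi_div_three_mul (by positivity) threshold_le
  refine (volume_sin_odd_mul_le M (by positivity)).trans (ENNReal.ofReal_le_ofReal ?_)
  rw [div_le_iff₀ hN]
  calc M * π + 2 * (M + 1) * arcsin (1 / (2 * M + 1))
      ≤ M * π + 2 * (M + 1) * (π / 3 * (1 / (2 * M + 1))) := by gcongr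
    _ = M * π + π * (2 * (M + 1) / (3 * (2 * M + 1))) := by field_simp
    _ ≤ M * π + π * (1 / 2) := by
        gcongr _ + _ * ?_
        rw [div_le_div_iff₀ (by positivity) two_pos]
        linarith
    _ = π / 2 * (2 * M + 1) := by ring

section Risk

variable {n M : ℕ} {a b : ℝ} {α : Fin (2 * (n * M) + 1) → ℝ}

theorem IsMinInterp.classRisk_le (hα : IsMinInterp n _ (spikedWeight a b) α) (hn : 0 < n)
    (ha : 0 < a) (hb : 0 < b) :
    classRisk (fun x ↦ ∑ j, α j * phiF _ x j)
      ≤ volume.real {u ∈ Set.Icc 0 π | (a - b) * sin u + b * sin ((2 * M + 1) * u) ≤ 0} / π := by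
  set g : ℝ → ℝ := fun u ↦ (a / 2 + b * cosSum M (2 * u)) / (a / 2 + b * M) with hg
  have g_periodic : Function.Periodic g π := fun u ↦ by
    simp only [hg, mul_add, ← cosSum_add_nat_mul_two_pi M 1 (2 * u), Nat.cast_one, one_mul]
  have f_eq : (fun x ↦ ∑ j, α j * phiF _ x j) = fun x ↦ g (n * π / 2 * (x + 1)) := by
    funext x
    rw [hα.sum_mul_phiF hn ha hb]
    simp only [hg]
    ring_nf
  have dirichlet : {u ∈ Set.Icc 0 π | g u ≤ 0}
      ⊆ {u ∈ Set.Icc 0 π | (a - b) * sin u + b * sin ((2 * M + 1) * u) ≤ 0} := by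
    rintro u ⟨hu, hgu⟩
    have numerator_nonpos : a / 2 + b * cosSum M (2 * u) ≤ 0 := by
      by_contra! h
      exact hgu.not_gt (div_pos h (by positivity))
    have hsin : 0 ≤ 2 * sin u := mul_nonneg two_pos.le (sin_nonneg_of_mem_Icc hu)
    refine ⟨hu, ?_⟩
    calc (a - b) * sin u + b * sin ((2 * M + 1) * u)
        = 2 * sin u * (a / 2 + b * cosSum M (2 * u)) := by
          linear_combination (-b) * two_mul_sin_mul_cosSum M u
      _ ≤ 0 := mul_nonpos_of_nonneg_of_nonpos hsin numerator_nonpos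
  rw [f_eq]
  refine (classRisk_comp_affine_le pi_pos g_periodic hn).trans ?_
  gcongr
  exact measure_ne_top_of_subset (Set.sep_subset _ _) measure_Icc_lt_top.ne

theorem IsMinInterp.classRisk_le_two_mul_div (hα : IsMinInterp n _ (spikedWeight a b) α)
    (hn : 0 < n) (ha : 0 < a) (hb : 0 < b) :
    classRisk (fun x ↦ ∑ j, α j * phiF _ x j) ≤ 2 * b / a := by
  have small_sine : {u ∈ Set.Icc 0 π | (a - b) * sin u + b * sin ((2 * M + 1) * u) ≤ 0}
      ⊆ {u ∈ Set.Icc 0 π | sin u ≤ 2 * b / a} := by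
    rintro u ⟨hu, h⟩
    refine ⟨hu, (le_div_iff₀ ha).mpr ?_⟩
    have := mul_le_mul_of_nonneg_left (neg_one_le_sin ((2 * M + 1) * u)) hb.le
    have := mul_le_mul_of_nonneg_left (sin_le_one u) hb.le
    linarith
  refine (hα.classRisk_le hn ha hb).trans ((div_le_iff₀ pi_pos).mpr ?_)
  refine ENNReal.toReal_le_of_le_ofReal (by positivity) ?_
  refine (measure_mono small_sine).trans ((volume_sin_le _).trans (ENNReal.ofReal_le_ofReal ?_))
  linarith [arcsin_le_pi_div_two_mul (by positivity : 0 ≤ 2 * b / a)]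

theorem IsMinInterp.classRisk_le_half (hα : IsMinInterp n _ (spikedWeight a b) α)
    (hn : 0 < n) (hM : 0 < M) (ha : 0 < a) (hb : 0 < b) (hab : 2 * M * b ≤ (2 * M + 1) * a) :
    classRisk (fun x ↦ ∑ j, α j * phiF _ x j) ≤ 1 / 2 := by
  have hN : (0 : ℝ) < 2 * M + 1 := by positivity
  have small_sine : {u ∈ Set.Icc 0 π | (a - b) * sin u + b * sin ((2 * M + 1) * u) ≤ 0}
      ⊆ {u ∈ Set.Icc 0 π | sin ((2 * M + 1) * u) ≤ 1 / (2 * M + 1)} := by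
    rintro u ⟨hu, h⟩
    refine ⟨hu, (le_div_iff₀ hN).mpr (le_of_mul_le_mul_left ?_ hb)⟩
    calc b * (sin ((2 * M + 1) * u) * (2 * M + 1))
        = (2 * M + 1) * (b * sin ((2 * M + 1) * u)) := by ring
      _ ≤ (2 * M + 1) * ((b - a) * sin u) :=
          mul_le_mul_of_nonneg_left (by linarith) hN.le
      _ = ((2 * M + 1) * b - (2 * M + 1) * a) * sin u := by ring
      _ ≤ b * sin u := by
          gcongr
          · exact sin_nonneg_of_mem_Icc hu
          · linarith
      _ ≤ b * 1 := by gcongr; exact sin_le_one u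
  refine (hα.classRisk_le hn ha hb).trans ((div_le_iff₀ pi_pos).mpr ?_)
  refine ENNReal.toReal_le_of_le_ofReal (by positivity) ((measure_mono small_sine).trans ?_)
  rw [one_div_mul_eq_div]
  exact volume_sin_odd_mul_le_half hM

end Risk

theorem Interpolates.classRisk_eq_zero {n : ℕ} (hn : 0 < n) {α : Fin 1 → ℝ}
    (hα : Interpolates n 1 α) : classRisk (fun x ↦ ∑ j, α j * phiF 1 x j) = 0 := by
  have eq_one (x : ℝ) : ∑ j, α j * phiF 1 x j = 1 := by
    simpa [phiF] using hα ⟨0, hn⟩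
  simp only [classRisk, eq_one, not_le.mpr one_pos, and_false]
  simp

section Bilevel

variable {n M : ℕ} {p q : ℝ}

theorem BilevelB.exists_eq {B : ℕ} (hB : BilevelB n B p) : ∃ M, B = 2 * (n * M) + 1 := by
  obtain ⟨hodd, ⟨M, hM⟩, -⟩ := hB
  have := hodd.pos
  exact ⟨M, by rw [← mul_assoc]; omega⟩

theorem BilevelB.rpow_le (hB : BilevelB n (2 * (n * M) + 1) p) :
    (n : ℝ) ^ p ≤ 2 * (n * M) + 1 + n := by
  have := (abs_le.mp hB.2.2).1
  push_cast at this
  linarith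

theorem bilevelLam_eq_spikedWeight (hn : 2 ≤ n) (hM : 0 < M) (hq : 0 < q) :
    ∃ a > 0, ∃ b > 0, bilevelLam n (2 * (n * M) + 1) q = spikedWeight a b
      ∧ 2 * (n * M) * b = ((n : ℝ) ^ q - 1) * a := by
  have hn1 : (1 : ℝ) < n := by exact_mod_cast hn
  have hγ : (n : ℝ) ^ (-q) < 1 := rpow_lt_one_of_one_lt_of_neg hn1 (neg_neg_of_pos hq)
  have tail_pos : 0 < ((2 * (n * M) + 1 : ℕ) : ℝ) - 1 := by
    push_cast
    rw [add_sub_cancel_right]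
    positivity
  refine ⟨(n : ℝ) ^ (-q) * (2 * (n * M) + 1 : ℕ), by positivity,
    (1 - (n : ℝ) ^ (-q)) * (2 * (n * M) + 1 : ℕ) / ((2 * (n * M) + 1 : ℕ) - 1), ?_, rfl, ?_⟩
  · exact div_pos (mul_pos (sub_pos.mpr hγ) (by positivity)) tail_pos
  · rw [rpow_neg (by positivity)]
    push_cast
    rw [add_sub_cancel_right]
    field_simp

theorem IsMinInterp.classRisk_le_min (hq : 0 < q) (hqp : q ≤ p) (hn : 2 ≤ n) {B : ℕ}
    (hB : BilevelB n B p) {α : Fin B → ℝ} (hα : IsMinInterp n B (bilevelLam n B q) α) :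
    classRisk (fun x ↦ ∑ j, α j * phiF B x j) ≤ min (1 / 2) (4 * (n : ℝ) ^ (q - p)) := by
  obtain ⟨M, rfl⟩ := hB.exists_eq
  have hn2 : (2 : ℝ) ≤ n := by exact_mod_cast hn
  rcases M.eq_zero_or_pos with rfl | hM
  · exact (Interpolates.classRisk_eq_zero (n := n) (by omega) hα.1).trans_le (by positivity)
  obtain ⟨a, ha, b, hb, weights, ratio⟩ := bilevelLam_eq_spikedWeight hn hM hq
  rw [weights] at hα
  have hM1 : (1 : ℝ) ≤ M := by exact_mod_cast hM
  have rpow_le := hB.rpow_le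
  refine le_min (hα.classRisk_le_half (by omega) hM ha hb ?_)
    ((hα.classRisk_le_two_mul_div (by omega) ha hb).trans ?_)
  · have hQ : (n : ℝ) ^ q - 1 ≤ n * (2 * M + 1) := by
      linarith [rpow_le_rpow_of_exponent_le (by linarith : (1 : ℝ) ≤ n) hqp]
    refine le_of_mul_le_mul_left ?_ (by positivity : (0 : ℝ) < n)
    calc n * (2 * M * b) = ((n : ℝ) ^ q - 1) * a := by rw [← ratio]; ring
      _ ≤ n * (2 * M + 1) * a := by gcongr
      _ = n * ((2 * M + 1) * a) := by ring
  · have hP : (n : ℝ) ^ p ≤ 4 * (n * M) := by nlinarith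
    rw [rpow_sub (by positivity), ← mul_div_assoc, div_le_div_iff₀ ha (by positivity)]
    calc 2 * b * (n : ℝ) ^ p ≤ 2 * b * (4 * (n * M)) := by gcongr
      _ = 4 * (2 * (n * M) * b) := by ring
      _ = 4 * (((n : ℝ) ^ q - 1) * a) := by rw [ratio]
      _ ≤ 4 * (n : ℝ) ^ q * a := by linarith

end Bilevel

theorem classRisk_nonneg (f : ℝ → ℝ) : 0 ≤ classRisk f :=
  div_nonneg ENNReal.toReal_nonneg two_pos.le

theorem stmt_6_general (p q : ℝ) (hq : 0 < q) (hpq : q < p) :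
    (∃ C : ℝ, 0 < C ∧ ∀ n : ℕ, 2 ≤ n → ∀ B : ℕ, BilevelB n B p →
      ∀ αhat : Fin B → ℝ, IsMinInterp n B (bilevelLam n B q) αhat →
        classRisk (fun x => ∑ j, αhat j * phiF B x j) ≤
          min (1 / 2) (C * (n : ℝ) ^ (q - p))) ∧
    (∀ (Bf : ℕ → ℕ) (αf : (n : ℕ) → Fin (Bf n) → ℝ),
      (∀ n : ℕ, 2 ≤ n → BilevelB n (Bf n) p ∧
          IsMinInterp n (Bf n) (bilevelLam n (Bf n) q) (αf n)) →
      Tendsto (fun n => classRisk (fun x => ∑ j, αf n j * phiF (Bf n) x j))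
        atTop (nhds 0)) := by
  refine ⟨⟨4, four_pos, fun n hn B hB α hα ↦ hα.classRisk_le_min hq hpq.le hn hB⟩,
    fun Bf αf h ↦ ?_⟩
  have rate_tendsto : Tendsto (fun n : ℕ ↦ 4 * (n : ℝ) ^ (q - p)) atTop (nhds 0) := by
    have := (tendsto_rpow_neg_atTop (sub_pos.mpr hpq)).comp tendsto_natCast_atTop_atTop
    simpa [Function.comp_def] using this.const_mul 4
  refine squeeze_zero' (.of_forall fun n ↦ classRisk_nonneg _) ?_ rate_tendsto
  filter_upwards [eventually_ge_atTop 2] with n hn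
  exact ((h n hn).2.classRisk_le_min hq hpq.le hn (h n hn).1).trans (min_le_right _ _)

/-- **Classification risk in the bilevel ensemble.**  Fix `p > q > 1`.  There is a constant
`C > 0` depending only on `(p, q)` such that for all `n ≥ 2`, the minimum-`Σ`-weighted-
`ℓ₂`-norm interpolator `f̂` of constant labels at the `n` regularly spaced points satisfies
`C(f̂) ≤ min (1/2) (C n^{q-p})`; in particular `C(f̂) → 0` as `n → ∞`. -/
theorem stmt_6 (p q : ℝ) (hq : 1 < q) (hpq : q < p) :
    (∃ C : ℝ, 0 < C ∧ ∀ n : ℕ, 2 ≤ n → ∀ B : ℕ, BilevelB n B p →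
      ∀ αhat : Fin B → ℝ, IsMinInterp n B (bilevelLam n B q) αhat →
        classRisk (fun x => ∑ j, αhat j * phiF B x j) ≤
          min (1 / 2) (C * (n : ℝ) ^ (q - p))) ∧
    (∀ (Bf : ℕ → ℕ) (αf : (n : ℕ) → Fin (Bf n) → ℝ),
      (∀ n : ℕ, 2 ≤ n → BilevelB n (Bf n) p ∧
          IsMinInterp n (Bf n) (bilevelLam n (Bf n) q) (αf n)) →
      Tendsto (fun n => classRisk (fun x => ∑ j, αf n j * phiF (Bf n) x j))
        atTop (nhds 0)) := stmt_6_general p q (one_pos.trans hq) hpq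
end
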